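/- Let 1 ≤ k ≤ n and let 𝕴 : 𝕏_n × 𝕏_n → ℝ be a complete n-symmetric kernel. Then the kernel 𝕴'(x_{1⃗}, x_{2⃗}) := ½ ∫ 𝕴(x_{1⃗}, y) dμ_k^n[x_{2⃗}, x_{1⃗}](y) + ½ ∫ 𝕴(x_{2⃗}, y) dμ_k^n[x_{1⃗}, x_{2⃗}](y) is also complete n-symmetric, and 𝕴 is PDI_k if and only if 𝕴' is PDI_k. Furthermore, when k = n, this 𝕴' coincides with the kernel (x_{1⃗},x_{2⃗}) ↦ 2^{−n} ∑_{α,β∈{1,2}^n} (−1)^{n−|α|−|β|} 𝕴(x_α, x_β). -/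

import Mathlib

noncomputable section

open Finset

namespace PDIPaper

variable {ι : Type*} [Fintype ι] [DecidableEq ι] {X : ι → Type*}

/-- The grid point `x_α` determined by grid data `x` and a multi-index `α`. -/
def gridPt {m : ℕ} (x : ∀ i, Fin m → X i) (α : ι → Fin m) : ∀ i, X i :=
  fun i => x i (α i)

/-- The point whose coordinates in `F` come from `a` and whose coordinates outside
`F` come from `b` (the point `a_F + b_{F^c}`). -/
def comb (F : Finset ι) (a b : ∀ i, X i) : ∀ i, X i :=
  fun i => if i ∈ F then a i else b i

/-- Glue an `F`-indexed point and an `Fᶜ`-indexed point into a full point. -/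
def glue (F : Finset ι) (a : ∀ i : {i // i ∈ F}, X i.1)
    (b : ∀ i : {i // i ∈ Fᶜ}, X i.1) : ∀ i, X i :=
  fun i => if h : i ∈ F then a ⟨i, h⟩ else b ⟨i, Finset.mem_compl.mpr h⟩

/-- The coefficients `c` of a discrete measure (supported on a grid with `m` points
in each coordinate) belong to `ℳ_k`: for every coordinate subset `F` of cardinality
`n - k + 1` and every fixed multi-index `β` off `F`, the sum of the coefficients over
the `F`-indices vanishes. -/
def MemM (k : ℕ) {m : ℕ} (c : (ι → Fin m) → ℝ) : Prop :=
  ∀ F : Finset ι, F.card = Fintype.card ι - k + 1 →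
    ∀ β : ι → Fin m,
      (∑ σ : {i // i ∈ F} → Fin m,
        c fun i => if h : i ∈ F then σ ⟨i, h⟩ else β i) = 0

/-- The double integral `∬ I dμ dμ` of a kernel against a discrete measure with
grid `x` and coefficients `c`. -/
def dSum {m : ℕ} (I : (∀ i, X i) → (∀ i, X i) → ℝ)
    (x : ∀ i, Fin m → X i) (c : (ι → Fin m) → ℝ) : ℝ :=
  ∑ α : ι → Fin m, ∑ β : ι → Fin m, c α * c β * I (gridPt x α) (gridPt x β)

/-- `sel x1 x2 α` is the point `x_α` for `α ∈ {1,2}^n`, encoded by `Bool`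
(`false ↦ 1`, `true ↦ 2`). -/
def sel (x1 x2 : ∀ i, X i) (α : ι → Bool) : ∀ i, X i :=
  fun i => if α i then x2 i else x1 i

/-- `n`-symmetry of a kernel: `I (x_α) (x_{3⃗-α}) = I x1 x2` for all `α ∈ {1,2}^n`. -/
def NSymm (I : (∀ i, X i) → (∀ i, X i) → ℝ) : Prop :=
  ∀ (x1 x2 : ∀ i, X i) (α : ι → Bool),
    I (sel x1 x2 α) (sel x1 x2 fun i => !(α i)) = I x1 x2

/-- Complete `n`-symmetry of a kernel. -/
def CompleteNSymm (I : (∀ i, X i) → (∀ i, X i) → ℝ) : Prop :=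
  NSymm I ∧ ∀ (F : Finset ι) (x1 x2 x3 x4 : ∀ i, X i),
    I (comb F x1 x3) (comb F x2 x3) = I (comb F x1 x4) (comb F x2 x4)

/-- Positive definite independent kernel of order `k`: an `n`-symmetric kernel with
`∬ (-1)^k I dμ dμ ≥ 0` for every discrete measure `μ ∈ ℳ_k`. -/
def IsPDI (k : ℕ) (I : (∀ i, X i) → (∀ i, X i) → ℝ) : Prop :=
  NSymm I ∧
    ∀ (m : ℕ) (x : ∀ i, Fin m → X i), (∀ i, Function.Injective (x i)) →
      ∀ c : (ι → Fin m) → ℝ, MemM k c →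
        0 ≤ (-1 : ℝ) ^ k * dSum I x c

/-- Strictly positive definite independent kernel of order `k`. -/
def IsSPDI (k : ℕ) (I : (∀ i, X i) → (∀ i, X i) → ℝ) : Prop :=
  NSymm I ∧
    ∀ (m : ℕ) (x : ∀ i, Fin m → X i), (∀ i, Function.Injective (x i)) →
      ∀ c : (ι → Fin m) → ℝ, MemM k c → (∃ α, c α ≠ 0) →
        0 < (-1 : ℝ) ^ k * dSum I x c

/-- The kernel vanishes on the extended diagonal `Δ_{k-1}^n`, i.e. on pairs of points
agreeing in at least `n - k + 1` coordinates. -/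
def ZeroAtDiag (k : ℕ) (I : (∀ i, X i) → (∀ i, X i) → ℝ) : Prop :=
  ∀ x1 x2 : ∀ i, X i,
    (∃ s : Finset ι, s.card = Fintype.card ι - k + 1 ∧ ∀ i ∈ s, x1 i = x2 i) →
    I x1 x2 = 0

/-- Conditionally negative definite (CND) symmetric kernel. -/
def IsCND {Z : Type*} (γ : Z → Z → ℝ) : Prop :=
  (∀ a b, γ a b = γ b a) ∧
    ∀ (m : ℕ) (z : Fin m → Z) (c : Fin m → ℝ), (∑ i, c i) = 0 →
      (∑ i, ∑ j, c i * c j * γ (z i) (z j)) ≤ 0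

/-- Positive definite kernel (quadratic-form condition). -/
def IsPD {Z : Type*} (K : Z → Z → ℝ) : Prop :=
  ∀ (m : ℕ) (z : Fin m → Z) (c : Fin m → ℝ),
    0 ≤ ∑ i, ∑ j, c i * c j * K (z i) (z j)

/-- Integral of `f` against the discrete measure
`μ_k^n[x1, x2] = δ_{x1} + ∑_{j=0}^{k-1} (-1)^{k-j} C(n-j-1, n-k) ∑_{|F|=j} δ_{x1_F + x2_{F^c}}`. -/
def muInt (k : ℕ) (x1 x2 : ∀ i, X i) (f : (∀ i, X i) → ℝ) : ℝ :=
  f x1 + ∑ j ∈ Finset.range k,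
    (-1 : ℝ) ^ (k - j) *
      ((Nat.choose (Fintype.card ι - j - 1) (Fintype.card ι - k) : ℕ) : ℝ) *
      ∑ F ∈ Finset.powersetCard j (Finset.univ : Finset ι), f (comb F x1 x2)

/-- The kernel `𝕴'` of Lemma `PDI2simpli`. -/
def stmt9Kernel {n : ℕ} {X : Fin n → Type*} (k : ℕ)
    (I : (∀ i, X i) → (∀ i, X i) → ℝ) : (∀ i, X i) → (∀ i, X i) → ℝ :=
  fun x1 x2 =>
    (1 / 2 : ℝ) * muInt k x2 x1 (fun y => I x1 y) +
      (1 / 2 : ℝ) * muInt k x1 x2 (fun y => I x2 y)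

/-- The kernel `𝕴'` of Lemma `PDInsimpli`:
`(x1,x2) ↦ 2^{-n} ∑_{α,β ∈ {1,2}^n} (-1)^{n-|α|-|β|} 𝕴(x_α, x_β)`. -/
def stmt9KernelN {n : ℕ} {X : Fin n → Type*}
    (I : (∀ i, X i) → (∀ i, X i) → ℝ) : (∀ i, X i) → (∀ i, X i) → ℝ :=
  fun x1 x2 =>
    ((2 : ℝ) ^ n)⁻¹ *
      ∑ α : Fin n → Bool, ∑ β : Fin n → Bool,
        (-1 : ℝ) ^ ((n : ℤ) - ((∑ i, if α i then 2 else 1 : ℕ) : ℤ)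
            - ((∑ i, if β i then 2 else 1 : ℕ) : ℤ)) *
          I (sel x1 x2 α) (sel x1 x2 β)

/-!
A complete `n`-symmetric kernel sees, of a pair of points, only the unordered pairs formed by their
coordinates, and it does not distinguish between pairs of equal coordinates. Hence the kernel
`𝕴_F(x, y) := 𝕴(x, y_F + x_{F^c})` is again complete `n`-symmetric, and so is `𝕴` plus any linear
combination of such kernels. Each half of `𝕴'` has this form, with all `|F| < k`; being symmetric,
the halves agree. As a function of `y`, `𝕴_F(x, y)` depends on fewer than `k` coordinates, so every
`μ ∈ ℳ_k` annihilates it: `𝕴` and `𝕴'` have the same double integrals against `ℳ_k`. For `k = n`,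
each of the `2^n` choices of `α` in the second formula contributes the same sum, since
`𝕴(x_α, x_β) = 𝕴_F(x_1, x_2)` for `F = {i | α_i ≠ β_i}`.
-/

/-- Real-valued kernels on the product of the sets `X i`. -/
abbrev Kernel (X : ι → Type*) : Type _ := (∀ i, X i) → (∀ i, X i) → ℝ

omit [Fintype ι] in
theorem completeNSymm_iff [Finite ι] {I : Kernel X} :
    CompleteNSymm I ↔ ∀ y z y' z' : ∀ i, X i,
      (∀ i, s(y i, z i) = s(y' i, z' i) ∨ y i = z i ∧ y' i = z' i) → I y z = I y' z' := by
  have := Fintype.ofFinite ι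
  classical
  refine ⟨fun hI y z y' z' h => ?_, fun h => ⟨fun x₁ x₂ α => h _ _ _ _ fun i => ?_,
    fun F x₁ x₂ x₃ x₄ => h _ _ _ _ fun i => ?_⟩⟩
  · -- Complete symmetry replaces the equal pairs, off `F`; symmetry flips pairs on `F`.
    let F : Finset ι := {i | ¬(y i = z i ∧ y' i = z' i)}
    let α : ι → Bool := fun i => decide (comb F y y' i ≠ y' i)
    have hy : comb F y y = y := by ext i; simp [comb]
    have hz : comb F z y = z := by ext i; by_cases hi : y i = z i <;> simp_all [comb, F]
    have hy' : sel (comb F y y') (comb F z y') α = y' := by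
      ext i
      specialize h i
      simp only [sel, comb, α, F, Sym2.eq_iff] at h ⊢
      grind
    have hz' : sel (comb F y y') (comb F z y') (fun i => !(α i)) = z' := by
      ext i
      specialize h i
      simp only [sel, comb, α, F, Sym2.eq_iff] at h ⊢
      grind
    calc I y z = I (comb F y y) (comb F z y) := by rw [hy, hz]
      _ = I (comb F y y') (comb F z y') := hI.2 F y z y y'
      _ = I y' z' := by rw [← hI.1 _ _ α, hy', hz']
  · cases hα : α i <;> simp [sel, hα]
  · by_cases hi : i ∈ F <;> simp [comb, hi]

omit [Fintype ι] [DecidableEq ι] in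
theorem NSymm.symm {I : Kernel X} (hI : NSymm I) (x₁ x₂ : ∀ i, X i) : I x₁ x₂ = I x₂ x₁ :=
  (hI x₁ x₂ fun _ => true).symm

/-- The complete `n`-symmetric kernels form a linear space, which gives the complete `n`-symmetry of
finite linear combinations such as `𝕴'`. -/
def completeNSymmSubmodule (X : ι → Type*) : Submodule ℝ (Kernel X) where
  carrier := {I | CompleteNSymm I}
  zero_mem' := ⟨fun _ _ _ => rfl, fun _ _ _ _ _ => rfl⟩
  add_mem' hI hJ := ⟨fun x₁ x₂ α => congrArg₂ (· + ·) (hI.1 x₁ x₂ α) (hJ.1 x₁ x₂ α),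
    fun F x₁ x₂ x₃ x₄ => congrArg₂ (· + ·) (hI.2 F x₁ x₂ x₃ x₄) (hJ.2 F x₁ x₂ x₃ x₄)⟩
  smul_mem' r _ hI := ⟨fun x₁ x₂ α => congrArg (r * ·) (hI.1 x₁ x₂ α),
    fun F x₁ x₂ x₃ x₄ => congrArg (r * ·) (hI.2 F x₁ x₂ x₃ x₄)⟩

/-- The kernel `𝕴_F`, obtained from `𝕴` by replacing the coordinates of the second point outside `F`
with those of the first. If `𝕴` is complete `n`-symmetric, this is `𝕴` as a kernel in the variables
`F` only. -/
def partialKernel (F : Finset ι) (I : Kernel X) : Kernel X :=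
  fun x₁ x₂ => I x₁ (comb F x₂ x₁)

omit [Fintype ι] in
protected theorem CompleteNSymm.partialKernel [Finite ι] {I : Kernel X} (hI : CompleteNSymm I)
    (F : Finset ι) : CompleteNSymm (partialKernel F I) := by
  refine completeNSymm_iff.2 fun y z y' z' h => completeNSymm_iff.1 hI _ _ _ _ fun i => ?_
  by_cases hi : i ∈ F
  · simpa [comb, hi] using h i
  · simp [comb, hi]

theorem CompleteNSymm.apply_sel_sel {I : Kernel X} (hI : CompleteNSymm I) (x₁ x₂ : ∀ i, X i)
    (α β : ι → Bool) :
    I (sel x₁ x₂ α) (sel x₁ x₂ β) = partialKernel {i | α i ≠ β i} I x₁ x₂ := by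
  refine completeNSymm_iff.1 hI _ _ _ _ fun i => ?_
  cases hα : α i <;> cases hβ : β i <;> simp [sel, comb, hα, hβ]

/-- The double integral `∬ I dμ dμ` as a linear functional of the kernel `I`. -/
def dSumLinearMap {m : ℕ} (x : ∀ i, Fin m → X i) (c : (ι → Fin m) → ℝ) : Kernel X →ₗ[ℝ] ℝ where
  toFun I := dSum I x c
  map_add' I J := by simp only [dSum, Pi.add_apply, mul_add, sum_add_distrib]
  map_smul' r I := by
    simp only [dSum, Pi.smul_apply, smul_eq_mul, mul_sum, mul_left_comm, RingHom.id_apply]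

/-- The kernel `(x₁, x₂) ↦ ∫ I(x₁, y) dμ_k^n[x₂, x₁](y)`, of which `𝕴'` is the symmetrization. -/
def muKernel (k : ℕ) (I : Kernel X) : Kernel X :=
  fun x₁ x₂ => muInt k x₂ x₁ (I x₁)

theorem muKernel_eq_add_sum_partialKernel (k : ℕ) (I : Kernel X) :
    muKernel k I = I + ∑ j ∈ range k,
      ((-1 : ℝ) ^ (k - j) * (Nat.choose (Fintype.card ι - j - 1) (Fintype.card ι - k) : ℝ)) •
        ∑ F ∈ powersetCard j univ, partialKernel F I := by
  ext x₁ x₂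
  simp only [muKernel, muInt, partialKernel, Pi.add_apply, Finset.sum_apply, Pi.smul_apply,
    smul_eq_mul]

protected theorem CompleteNSymm.muKernel {I : Kernel X} (hI : CompleteNSymm I) (k : ℕ) :
    CompleteNSymm (muKernel k I) := by
  rw [muKernel_eq_add_sum_partialKernel]
  exact (completeNSymmSubmodule X).add_mem hI <| sum_mem fun _ _ =>
    Submodule.smul_mem _ _ <| sum_mem fun F _ => hI.partialKernel F

theorem stmt9Kernel_eq_muKernel {n : ℕ} {X : Fin n → Type*} (k : ℕ) {I : Kernel X}
    (hI : CompleteNSymm I) : stmt9Kernel k I = muKernel k I := by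
  ext x₁ x₂
  calc stmt9Kernel k I x₁ x₂ = 1 / 2 * muKernel k I x₁ x₂ + 1 / 2 * muKernel k I x₂ x₁ := rfl
    _ = muKernel k I x₁ x₂ := by rw [(hI.muKernel k).1.symm x₂ x₁]; ring

theorem MemM.sum_mul_eq_zero_of_dependsOn {k m : ℕ} {c : (ι → Fin m) → ℝ} (hc : MemM k c)
    (hk : k ≤ Fintype.card ι) {F : Finset ι} (hF : #F < k) {f : (ι → Fin m) → ℝ}
    (hf : DependsOn f (F : Set ι)) : ∑ α, c α * f α = 0 := by
  obtain ⟨G, hGF, hG⟩ : ∃ G ⊆ Fᶜ, #G = Fintype.card ι - k + 1 :=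
    exists_subset_card_eq (by rw [card_compl]; omega)
  let e := Equiv.piEquivPiSubtypeProd (· ∈ G) fun _ => Fin m
  rw [← e.symm.sum_comp, Fintype.sum_prod_type_right]
  refine sum_eq_zero fun τ _ => ?_
  rcases isEmpty_or_nonempty ({i // i ∈ G} → Fin m) with _ | ⟨⟨σ₀⟩⟩
  · exact Fintype.sum_empty _
  have f_const (σ) : f (e.symm (σ, τ)) = f (e.symm (σ₀, τ)) := hf fun i hi => by
    have hiG : i ∉ G := fun h => mem_compl.1 (hGF h) hi
    simp [e, hiG]
  have sum_c : ∑ σ, c (e.symm (σ, τ)) = 0 := by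
    rw [← hc G hG (e.symm (σ₀, τ))]
    refine sum_congr rfl fun σ _ => congrArg c ?_
    ext i
    by_cases hi : i ∈ G <;> simp [e, hi]
  simp only [f_const, ← sum_mul, sum_c, zero_mul]

theorem dSum_partialKernel_eq_zero {k m : ℕ} {c : (ι → Fin m) → ℝ} (hc : MemM k c)
    (hk : k ≤ Fintype.card ι) {F : Finset ι} (hF : #F < k) (I : Kernel X)
    (x : ∀ i, Fin m → X i) : dSum (partialKernel F I) x c = 0 := by
  refine sum_eq_zero fun α _ => ?_
  simp only [mul_assoc, ← mul_sum]
  refine mul_eq_zero_of_right _ (hc.sum_mul_eq_zero_of_dependsOn hk hF fun β β' h => ?_)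
  have : comb F (gridPt x β) (gridPt x α) = comb F (gridPt x β') (gridPt x α) := by
    ext i
    by_cases hi : i ∈ F
    · simp [comb, gridPt, hi, h i hi]
    · simp [comb, hi]
  simp only [partialKernel, this]

theorem dSum_muKernel {k m : ℕ} {c : (ι → Fin m) → ℝ} (hc : MemM k c)
    (hk : k ≤ Fintype.card ι) (I : Kernel X) (x : ∀ i, Fin m → X i) :
    dSum (muKernel k I) x c = dSum I x c := by
  change dSumLinearMap x c _ = dSumLinearMap x c I
  rw [muKernel_eq_add_sum_partialKernel, map_add, map_sum, add_eq_left]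
  refine sum_eq_zero fun j hj => ?_
  rw [map_smul, map_sum, sum_eq_zero, smul_zero]
  intro F hF
  refine dSum_partialKernel_eq_zero hc hk ?_ I x
  rw [(mem_powersetCard.1 hF).2]
  exact mem_range.1 hj

theorem isPDI_muKernel_iff {k : ℕ} (hk : k ≤ Fintype.card ι) {I : Kernel X}
    (hI : CompleteNSymm I) : IsPDI k (muKernel k I) ↔ IsPDI k I := by
  refine and_congr (iff_of_true (hI.muKernel k).1 hI.1) ?_
  refine forall₅_congr fun m x _ c hc => ?_
  rw [dSum_muKernel hc hk]

theorem muKernel_card_apply (I : Kernel X) (x₁ x₂ : ∀ i, X i) :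
    muKernel (Fintype.card ι) I x₁ x₂ =
      ∑ F : Finset ι, (-1 : ℝ) ^ #Fᶜ * partialKernel F I x₁ x₂ := by
  have comb_univ : comb univ x₂ x₁ = x₂ := by ext i; simp [comb]
  rw [← powerset_univ, sum_powerset, card_univ, sum_range_succ, add_comm, ← card_univ,
    powersetCard_self, sum_singleton]
  simp only [muKernel, muInt, partialKernel, comb_univ, card_univ, compl_univ, card_empty, pow_zero,
    one_mul, Nat.sub_self, Nat.choose_zero_right, Nat.cast_one, mul_one, mul_sum]
  congr 1
  refine sum_congr rfl fun j _ => sum_congr rfl fun F hF => ?_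
  rw [card_compl, (mem_powersetCard.1 hF).2]

theorem neg_one_zpow_card_sub_sub {K : Type*} [DivisionRing K] (α β : ι → Bool) :
    (-1 : K) ^ ((Fintype.card ι : ℤ) - ((∑ i, if α i then 2 else 1 : ℕ) : ℤ)
        - ((∑ i, if β i then 2 else 1 : ℕ) : ℤ)) =
      (-1 : K) ^ #({i | α i ≠ β i} : Finset ι)ᶜ := by
  have exponent : (Fintype.card ι : ℤ) - ((∑ i, if α i then 2 else 1 : ℕ) : ℤ)
      - ((∑ i, if β i then 2 else 1 : ℕ) : ℤ) =
      #({i | α i ≠ β i} : Finset ι)ᶜ + 2 * -∑ i, if α i && β i then 2 else 1 := by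
    rw [compl_filter, card_filter, Fintype.card_eq_sum_ones]
    push_cast
    rw [← sum_neg_distrib, mul_sum, ← sum_sub_distrib, ← sum_sub_distrib, ← sum_add_distrib]
    refine sum_congr rfl fun i _ => ?_
    cases α i <;> cases β i <;> simp
  rw [exponent, zpow_add₀ (neg_ne_zero.2 one_ne_zero), zpow_natCast,
    (even_two_mul _).neg_one_zpow, mul_one]

theorem sum_filter_ne_eq_sum_finset {M : Type*} [AddCommMonoid M] (α : ι → Bool)
    (g : Finset ι → M) : ∑ β : ι → Bool, g {i | α i ≠ β i} = ∑ F, g F := by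
  refine sum_nbij' (fun β => ({i | α i ≠ β i} : Finset ι)) (fun F i => xor (α i) (decide (i ∈ F)))
    (by simp) (by simp) (fun β _ => ?_) (fun F _ => ?_) (fun _ _ => rfl)
  · ext i
    cases hα : α i <;> cases hβ : β i <;> simp [hα, hβ]
  · ext i
    by_cases hi : i ∈ F <;> cases hα : α i <;> simp [hα, hi]

theorem stmt9KernelN_eq_muKernel {n : ℕ} {X : Fin n → Type*} {I : Kernel X}
    (hI : CompleteNSymm I) : stmt9KernelN I = muKernel n I := by
  ext x₁ x₂
  have inner_sum (α : Fin n → Bool) :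
      ∑ β : Fin n → Bool, (-1 : ℝ) ^ ((n : ℤ) - ((∑ i, if α i then 2 else 1 : ℕ) : ℤ)
          - ((∑ i, if β i then 2 else 1 : ℕ) : ℤ)) * I (sel x₁ x₂ α) (sel x₁ x₂ β) =
        muKernel n I x₁ x₂ := by
    have sign := neg_one_zpow_card_sub_sub (K := ℝ) α
    have card_apply := muKernel_card_apply I x₁ x₂
    simp only [Fintype.card_fin] at sign card_apply
    simp only [sign, hI.apply_sel_sel, card_apply]
    exact sum_filter_ne_eq_sum_finset α fun F => (-1 : ℝ) ^ #Fᶜ * partialKernel F I x₁ x₂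
  simp only [stmt9KernelN, inner_sum, sum_const, card_univ, Fintype.card_fun, Fintype.card_bool,
    Fintype.card_fin, nsmul_eq_mul, Nat.cast_pow, Nat.cast_ofNat]
  exact inv_mul_cancel_left₀ (by positivity) _

theorem statement9 {n k : ℕ} (hk1 : 1 ≤ k) (hk2 : k ≤ n) (X : Fin n → Type*)
    (I : (∀ i, X i) → (∀ i, X i) → ℝ) (hc : CompleteNSymm I) :
    CompleteNSymm (stmt9Kernel k I) ∧
      (IsPDI k I ↔ IsPDI k (stmt9Kernel k I)) ∧
      (k = n → stmt9Kernel k I = stmt9KernelN I) := by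
  rw [stmt9Kernel_eq_muKernel k hc]
  refine ⟨hc.muKernel k, (isPDI_muKernel_iff ?_ hc).symm, ?_⟩
  · rwa [Fintype.card_fin]
  · rintro rfl
    exact (stmt9KernelN_eq_muKernel hc).symm

end PDIPaper
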